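/- arXiv:0801.0080 — 4 statements merged into one kernel-verified Lean document; each statement's English description precedes it below -/
import Mathlib

section
/- Let F be a field and let A₁,…,Aₙ be finite subsets of F with |Aᵢ| ≥ i for i = 1,…,n. Let f(x₁,…,xₙ) = x₁^k + ⋯ + xₙ^k + g(x₁,…,xₙ) ∈ F[x₁,…,xₙ] where deg g < k ≤ n. Set qᵢ = min{ ⌊(|A_j| − j)/k⌋ : i ≤ j ≤ n, j ≡ i (mod k) } for i = 1,…,n. Then |{ f(x₁,…,xₙ) : x₁ ∈ A₁,…,xₙ ∈ Aₙ, and xᵢ ≠ x_j whenever i ≠ j }| ≥ min{ p(F), q₁ + ⋯ + qₙ + 1 }. -/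
open MvPolynomial Finset

lemma aux_coeff_pow {n : ℕ} (k : ℕ) (hk : 1 ≤ k) (N : ℕ) (b : Fin n →₀ ℕ) (hb : ∑ i, b i = N) :
    (coeff (k • b) ((∑ i : Fin n, (X i : MvPolynomial (Fin n) ℤ) ^ k) ^ N)) * ∏ i, ((b i).factorial : ℤ)
      = N.factorial := by
  have h1 : (∑ i : Fin n, (X i : MvPolynomial (Fin n) ℤ) ^ k) ^ N
      = expand k ((∑ i : Fin n, (X i : MvPolynomial (Fin n) ℤ)) ^ N) := by
    simp [map_pow, map_sum]
  have h2 : b.sum (fun _ m ↦ m) = N := by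
    rw [Finsupp.sum_fintype _ _ (by simp)]; exact hb
  rw [h1, coeff_expand_smul k (by omega), coeff_sum_X_pow_of_fintype, if_pos h2,
    ← Finsupp.multinomial_of_support_subset (Finset.subset_univ _), mul_comm]
  have := Nat.multinomial_spec (s := Finset.univ) (f := (b : Fin n → ℕ))
  rw [hb] at this
  exact_mod_cast this

lemma aux_coeff_not_dvd {n : ℕ} (k : ℕ) (N : ℕ) (b : Fin n →₀ ℕ) (i : Fin n)
    (hb : ¬ k ∣ b i) :
    (coeff b ((∑ i : Fin n, (X i : MvPolynomial (Fin n) ℤ) ^ k) ^ N)) = 0 := by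
  have h1 : (∑ i : Fin n, (X i : MvPolynomial (Fin n) ℤ) ^ k) ^ N
      = expand k ((∑ i : Fin n, (X i : MvPolynomial (Fin n) ℤ)) ^ N) := by
    simp [map_pow, map_sum]
  rw [h1]
  exact coeff_expand_of_not_dvd _ hb

lemma aux_term {n : ℕ} (k : ℕ) (hk : 1 ≤ k) (q : Fin n → ℕ) (d e : Fin n →₀ ℕ)
    (hd : ∀ i, d i = k * q i + i.1) (hs : ∑ i, e i = ∑ i : Fin n, i.1) :
    coeff d (monomial e 1 * (∑ i : Fin n, (X i : MvPolynomial (Fin n) ℤ) ^ k) ^ (∑ i, q i))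
      * ∏ i : Fin n, ((q i + i.1 / k).factorial : ℤ)
    = ((∑ i, q i).factorial : ℤ) * ∏ i : Fin n, (if i.1 % k = e i % k then
        ((q i + i.1 / k).descFactorial (e i / k) : ℤ) else 0) := by
  have hd' : ∀ i, d i = k * (q i + i.1 / k) + i.1 % k := by
    intro i
    rw [hd, mul_add, add_assoc, Nat.div_add_mod]
  rw [coeff_monomial_mul', one_mul]
  by_cases hm : ∀ i : Fin n, i.1 % k = e i % k
  · by_cases hle : ∀ i : Fin n, e i / k ≤ q i + i.1 / k
    · have hed : e ≤ d := by
        intro i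
        rw [hd', ← Nat.div_add_mod (e i) k, hm i]
        have := Nat.mul_le_mul_left k (hle i)
        omega
      rw [if_pos hed]
      let b : Fin n →₀ ℕ := Finsupp.equivFunOnFinite.symm (fun i => q i + i.1 / k - e i / k)
      have hb : ∀ i, b i = q i + i.1 / k - e i / k := fun i => rfl
      have hdb : d - e = k • b := by
        ext i
        simp only [Finsupp.coe_tsub, Pi.sub_apply, Finsupp.coe_smul, Pi.smul_apply, smul_eq_mul, hb]
        rw [Nat.mul_sub, hd']
        have := Nat.div_add_mod (e i) k
        have := hm i
        omega
      have hbs : ∑ i, b i = ∑ i, q i := by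
        have h1 : k * ∑ i, b i + ∑ i, e i = ∑ i, d i := by
          rw [Finset.mul_sum, ← Finset.sum_add_distrib]
          apply Finset.sum_congr rfl
          intro i _
          have h2 := DFunLike.congr_fun hdb i
          have h3 := hed i
          simp only [Finsupp.coe_tsub, Pi.sub_apply, Finsupp.coe_smul, Pi.smul_apply,
            smul_eq_mul] at h2
          omega
        have h2 : ∑ i, d i = k * ∑ i, q i + ∑ i : Fin n, i.1 := by
          rw [Finset.mul_sum, ← Finset.sum_add_distrib]
          exact Finset.sum_congr rfl fun i _ => hd i
        have : k * ∑ i, b i = k * ∑ i, q i := by omega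
        exact Nat.eq_of_mul_eq_mul_left (by omega) this
      rw [hdb, ← aux_coeff_pow k hk _ b hbs, mul_assoc, ← Finset.prod_mul_distrib]
      congr 1
      apply Finset.prod_congr rfl
      intro i _
      rw [if_pos (hm i), hb]
      exact_mod_cast (Nat.factorial_mul_descFactorial (hle i)).symm
    · push Not at hle
      obtain ⟨i, hi⟩ := hle
      rw [if_neg, zero_mul, Finset.prod_eq_zero (Finset.mem_univ i), mul_zero]
      · rw [if_pos (hm i), Nat.descFactorial_of_lt hi]; rfl
      · intro h
        have h1 := h i
        rw [hd', ← Nat.div_add_mod (e i) k, hm i] at h1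
        have := Nat.mul_lt_mul_of_pos_left hi (show 0 < k by omega)
        omega
  · push Not at hm
    obtain ⟨i, hi⟩ := hm
    have h0 : ∏ i : Fin n, (if i.1 % k = e i % k then
        ((q i + i.1 / k).descFactorial (e i / k) : ℤ) else 0) = 0 :=
      Finset.prod_eq_zero (Finset.mem_univ i) (if_neg hi)
    rw [h0, mul_zero]
    split_ifs with h
    · rw [aux_coeff_not_dvd k _ _ i, zero_mul]
      intro hdvd
      apply hi
      have h1 := h i
      simp only [Finsupp.coe_tsub, Pi.sub_apply] at hdvd
      have h2 := (Nat.modEq_iff_dvd' h1).2 hdvd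
      have h3 : e i % k = d i % k := h2
      rw [h3, hd, Nat.mul_add_mod]
    · simp

def auxM (n k : ℕ) (q : Fin n → ℕ) : Matrix (Fin n) (Fin n) ℤ :=
  Matrix.of fun i j => if i.1 % k = j.1 % k then ((q i + i.1 / k).descFactorial (j.1 / k) : ℤ) else 0

lemma aux_prod_X {R : Type*} [CommRing R] {n : ℕ} (e : Fin n → ℕ) :
    ∏ i, (X i : MvPolynomial (Fin n) R) ^ e i = monomial (Finsupp.equivFunOnFinite.symm e) 1 := by
  rw [monomial_eq, C_1, one_mul, Finsupp.prod_fintype _ _ (by simp)]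
  rfl

lemma aux_vdm {R : Type*} [CommRing R] {n : ℕ} :
    (Matrix.vandermonde (X : Fin n → MvPolynomial (Fin n) R)).det =
    ∑ σ : Equiv.Perm (Fin n), Equiv.Perm.sign σ •
      monomial (Finsupp.equivFunOnFinite.symm (fun i => (σ i).1)) (1 : R) := by
  rw [← Matrix.det_transpose, Matrix.det_apply]
  apply Finset.sum_congr rfl
  intro σ _
  rw [← aux_prod_X]
  simp [Matrix.vandermonde_apply]

lemma aux_coeff {n : ℕ} (k : ℕ) (hk : 1 ≤ k) (q : Fin n → ℕ) (d : Fin n →₀ ℕ)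
    (hd : ∀ i, d i = k * q i + i.1) :
    coeff d ((Matrix.vandermonde (X : Fin n → MvPolynomial (Fin n) ℤ)).det *
      (∑ i : Fin n, (X i : MvPolynomial (Fin n) ℤ) ^ k) ^ (∑ i, q i))
      * ∏ i : Fin n, ((q i + i.1 / k).factorial : ℤ)
    = ((∑ i, q i).factorial : ℤ) * (auxM n k q).det := by
  rw [aux_vdm, ← Matrix.det_transpose (auxM n k q), Matrix.det_apply, Finset.sum_mul, coeff_sum,
    Finset.sum_mul, Finset.mul_sum]
  apply Finset.sum_congr rfl
  intro σ _
  have := aux_term k hk q d (Finsupp.equivFunOnFinite.symm (fun i => (σ i).1)) hd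
    (by simpa using Equiv.sum_comp σ (fun i : Fin n => i.1))
  rw [smul_mul_assoc, Units.smul_def, coeff_smul, smul_mul_assoc, this, Units.smul_def,
    mul_smul_comm]
  rfl

lemma aux_vand_dvd {s : ℕ} (m : Fin s → ℕ) (hm : StrictMono m) :
    (Matrix.of (fun i j : Fin s => ((m i).descFactorial j.1 : ℤ))).det ∣
      ∏ i, ((m i).factorial : ℤ) := by
  have h := Matrix.det_eval_matrixOfPolynomials_eq_det_vandermonde (fun i => (m i : ℤ))
    (fun j : Fin s => descPochhammer ℤ j.1) (fun i => descPochhammer_natDegree ℤ _)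
    (fun i => monic_descPochhammer ℤ _)
  simp only [descPochhammer_eval_eq_descFactorial] at h
  rw [← h, Matrix.det_vandermonde, Finset.prod_comm' (t' := Finset.univ) (s' := fun j => Finset.Iio j)
    (by simp)]
  apply Finset.prod_dvd_prod_of_dvd
  intro j _
  have h1 : ∏ x ∈ Finset.Iio j, ((m j : ℤ) - m x) = ((∏ x ∈ Finset.Iio j, (m j - m x) : ℕ) : ℤ) := by
    rw [Nat.cast_prod]
    apply Finset.prod_congr rfl
    intro x hx
    rw [Nat.cast_sub (hm (Finset.mem_Iio.1 hx)).le]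
  rw [h1]
  apply Int.natCast_dvd_natCast.2
  have h2 : ∏ x ∈ Finset.Iio j, (m j - m x) = ∏ y ∈ (Finset.Iio j).image (fun x => m j - m x), y := by
    rw [Finset.prod_image]
    intro x hx y hy hxy
    have := hm (Finset.mem_Iio.1 hx)
    have := hm (Finset.mem_Iio.1 hy)
    apply hm.injective
    simp only at hxy
    omega
  rw [h2, ← Finset.prod_Ico_id_eq_factorial]
  apply Finset.prod_dvd_prod_of_subset
  intro y hy
  obtain ⟨x, hx, rfl⟩ := Finset.mem_image.1 hy
  have := hm (Finset.mem_Iio.1 hx)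
  rw [Finset.mem_Ico]
  omega

def auxE (n k r : ℕ) (hr : r < k) (hk : 1 ≤ k) (hkn : k ≤ n) :
    Fin ((n + k - 1 - r) / k) ≃ {i : Fin n // i.1 % k = r} where
  toFun t := ⟨⟨r + k * t.1, by
    have h := t.2
    have := (Nat.le_div_iff_mul_le (show 0 < k by omega)).1 (Nat.succ_le_of_lt h)
    rw [Nat.succ_mul, mul_comm] at this
    omega⟩, by simp [Nat.mod_eq_of_lt hr]⟩
  invFun i := ⟨i.1.1 / k, by
    apply Nat.lt_of_succ_le
    apply (Nat.le_div_iff_mul_le (show 0 < k by omega)).2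
    have h1 := i.1.2
    have h2 := i.2
    have := Nat.div_add_mod i.1.1 k
    rw [Nat.succ_mul, mul_comm]
    omega⟩
  left_inv t := by
    ext
    simp only
    rw [Nat.add_mul_div_left _ _ (by omega), Nat.div_eq_of_lt hr, zero_add]
  right_inv i := by
    ext
    simp only
    have h2 := i.2
    have := Nat.div_add_mod i.1.1 k
    omega

lemma aux_det_dvd {n : ℕ} (k : ℕ) (hk : 1 ≤ k) (hkn : k ≤ n) (q : Fin n → ℕ)
    (hq : ∀ i j : Fin n, i ≤ j → j.1 % k = i.1 % k → q i ≤ q j) :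
    (auxM n k q).det ∣ ∏ i : Fin n, ((q i + i.1 / k).factorial : ℤ) := by
  have hB : (auxM n k q).BlockTriangular (fun i : Fin n => i.1 % k) := by
    intro i j hij
    simp only [auxM, Matrix.of_apply]
    rw [if_neg]
    simp only at hij
    omega
  rw [hB.det, ← Finset.prod_fiberwise_of_maps_to (t := Finset.univ.image (fun i : Fin n => i.1 % k))
    (g := fun i : Fin n => i.1 % k) (fun i hi => Finset.mem_image_of_mem _ hi)]
  apply Finset.prod_dvd_prod_of_dvd
  intro r hr
  have hr' : r < k := by
    obtain ⟨i, _, rfl⟩ := Finset.mem_image.1 hr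
    exact Nat.mod_lt _ (by omega)
  let E := auxE n k r hr' hk hkn
  have hE : ∀ t, (E t).1.1 = r + k * t.1 := fun t => rfl
  have hEd : ∀ t, (E t).1.1 / k = t.1 := by
    intro t
    rw [hE, Nat.add_mul_div_left _ _ (by omega), Nat.div_eq_of_lt hr', zero_add]
  have h := aux_vand_dvd (fun t => q (E t).1 + (E t).1.1 / k) (by
    intro t u htu
    have h1 : t.1 < u.1 := htu
    have h2 : q (E t).1 ≤ q (E u).1 := by
      apply hq
      · change (E t).1.1 ≤ (E u).1.1
        rw [hE, hE]
        have := Nat.mul_le_mul_left k h1.le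
        omega
      · rw [(E t).2, (E u).2]
    simp only [hEd]
    omega)
  have h3 : ((auxM n k q).toSquareBlock (fun i : Fin n => i.1 % k) r).det =
      (Matrix.of (fun i j => ((q (E i).1 + (E i).1.1 / k).descFactorial j.1 : ℤ))).det := by
    rw [← Matrix.det_submatrix_equiv_self E]
    congr 1
    ext i j
    simp only [Matrix.submatrix_apply, Matrix.toSquareBlock_def, auxM, Matrix.of_apply]
    rw [if_pos ((E i).2.trans (E j).2.symm), hEd j]
  rw [h3]
  refine h.trans (dvd_of_eq ?_)
  rw [Equiv.prod_comp E (fun i => (((q i.1 + i.1.1 / k).factorial : ℕ) : ℤ))]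
  exact (Finset.prod_subtype _ (by simp) (fun i : Fin n => (((q i + i.1 / k).factorial : ℕ) : ℤ))).symm

lemma aux_coeff_dvd {n : ℕ} (k : ℕ) (hk : 1 ≤ k) (hkn : k ≤ n) (q : Fin n → ℕ)
    (hq : ∀ i j : Fin n, i ≤ j → j.1 % k = i.1 % k → q i ≤ q j) (d : Fin n →₀ ℕ)
    (hd : ∀ i, d i = k * q i + i.1) :
    coeff d ((Matrix.vandermonde (X : Fin n → MvPolynomial (Fin n) ℤ)).det *
      (∑ i : Fin n, (X i : MvPolynomial (Fin n) ℤ) ^ k) ^ (∑ i, q i))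
      ∣ ((∑ i, q i).factorial : ℤ) := by
  have h1 := aux_coeff k hk q d hd
  obtain ⟨H, hH⟩ := aux_det_dvd k hk hkn q hq
  have h0 : ∏ i : Fin n, ((q i + i.1 / k).factorial : ℤ) ≠ 0 :=
    Finset.prod_ne_zero_iff.2 fun i _ => by exact_mod_cast Nat.factorial_ne_zero _
  have hdet : (auxM n k q).det ≠ 0 := by
    rintro h; rw [h, zero_mul] at hH; exact h0 hH
  refine ⟨H, mul_left_cancel₀ hdet ?_⟩
  rw [hH] at h1
  linear_combination -h1

lemma aux_reduce {n : ℕ} (k : ℕ) (t : ℕ) : ∀ (s : ℕ) (q : Fin n → ℕ), ∑ i, q i = t + s →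
    (∀ i j : Fin n, i ≤ j → j.1 % k = i.1 % k → q i ≤ q j) →
    ∃ q' : Fin n → ℕ, (∀ i, q' i ≤ q i) ∧ ∑ i, q' i = t ∧
    (∀ i j : Fin n, i ≤ j → j.1 % k = i.1 % k → q' i ≤ q' j) := by
  intro s
  induction s with
  | zero => intro q h1 h2; exact ⟨q, fun i => le_rfl, h1, h2⟩
  | succ s ih =>
    intro q h1 h2
    have hne : (Finset.univ.filter (fun i => q i ≠ 0)).Nonempty := by
      by_contra hcon
      rw [Finset.not_nonempty_iff_eq_empty, Finset.filter_eq_empty_iff] at hcon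
      have : ∑ i, q i = 0 := Finset.sum_eq_zero fun i hi => by simpa using hcon hi
      omega
    obtain ⟨i0, hi0, hmin⟩ := Finset.exists_min_image _ (fun i => i) hne
    simp only [Finset.mem_filter, Finset.mem_univ, true_and] at hi0 hmin
    have hsum : ∑ i, Function.update q i0 (q i0 - 1) i = t + s := by
      rw [Finset.sum_update_of_mem (Finset.mem_univ _)]
      rw [← Finset.add_sum_erase _ _ (Finset.mem_univ i0)] at h1
      rw [Finset.sdiff_singleton_eq_erase]
      omega
    obtain ⟨q', a, b, c⟩ := ih (Function.update q i0 (q i0 - 1)) hsum (by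
      intro i j hij hm
      have h3 := h2 i j hij hm
      by_cases hi : i = i0 <;> by_cases hj : j = i0
      · rw [hi, hj]
      · subst hi; simp [hj]; omega
      · subst hj
        have : q i = 0 := by
          by_contra h
          exact hi (le_antisymm hij (hmin i h))
        simp [hi, this]
      · simpa [hi, hj] using h3)
    refine ⟨q', fun i => (a i).trans ?_, b, c⟩
    by_cases hi : i = i0
    · subst hi; simp
    · simp [hi]

lemma aux_prod_expand {F : Type*} [Field F] {n : ℕ} (k : ℕ) (p : MvPolynomial (Fin n) F)
    (hp : p.totalDegree ≤ k) (g : F → MvPolynomial (Fin n) F) (hg : ∀ c, (g c).totalDegree < k)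
    (C : Finset F) :
    ∃ R : MvPolynomial (Fin n) F, ∏ c ∈ C, (p + g c) = p ^ C.card + R ∧
      (R = 0 ∨ R.totalDegree < k * C.card) := by
  classical
  induction C using Finset.induction_on with
  | empty => exact ⟨0, by simp⟩
  | insert a s ha ih =>
    obtain ⟨R, h1, h2⟩ := ih
    refine ⟨g a * p ^ s.card + (p + g a) * R, ?_, Or.inr ?_⟩
    · rw [Finset.prod_insert ha, h1, Finset.card_insert_of_notMem ha]; ring
    · rw [Finset.card_insert_of_notMem ha]
      have hga := hg a
      have e1 : (g a * p ^ s.card).totalDegree < k * (s.card + 1) := by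
        have i1 := totalDegree_mul (g a) (p ^ s.card)
        have i2 := totalDegree_pow p s.card
        have i3 := Nat.mul_le_mul_left s.card hp
        rw [mul_add, mul_comm k s.card]
        omega
      refine lt_of_le_of_lt (totalDegree_add _ _) (max_lt e1 ?_)
      rcases h2 with h2 | h2
      · rw [h2, mul_zero, totalDegree_zero]; omega
      · have i1 := totalDegree_mul (p + g a) R
        have i2 := totalDegree_add p (g a)
        have i3 : max p.totalDegree (g a).totalDegree ≤ k := max_le hp hga.le
        rw [mul_add]
        omega

lemma aux_vdm_degree {F : Type*} [Field F] {n : ℕ} :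
    (Matrix.vandermonde (X : Fin n → MvPolynomial (Fin n) F)).det.totalDegree
      ≤ ∑ i : Fin n, i.1 := by
  rw [aux_vdm]
  apply totalDegree_finsetSum_le
  intro σ _
  rw [Units.smul_def]
  refine (totalDegree_smul_le _ _).trans ((totalDegree_monomial_le _ _).trans ?_)
  rw [Finsupp.sum_fintype _ _ (by simp)]
  simpa using (Equiv.sum_comp σ (fun i : Fin n => i.1)).le

theorem stmt_3 {F : Type*} [Field F] (n k : ℕ) (hk1 : 1 ≤ k) (hkn : k ≤ n)
    (A : Fin n → Finset F) (hA : ∀ i : Fin n, i.1 + 1 ≤ (A i).card)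
    (g f : MvPolynomial (Fin n) F)
    (hf : f = (∑ i : Fin n, (X i : MvPolynomial (Fin n) F) ^ k) + g)
    (hg : g.totalDegree < k)
    (q : Fin n → ℕ)
    (hq : ∀ i : Fin n, q i =
      sInf {c : ℕ | ∃ j : Fin n, i ≤ j ∧ j.1 % k = i.1 % k ∧
        c = ((A j).card - (j.1 + 1)) / k}) :
    min (if ringChar F = 0 then (⊤ : ℕ∞) else (ringChar F : ℕ∞))
        ((∑ i : Fin n, q i) + 1 : ℕ) ≤
      ({y : F | ∃ x : Fin n → F, (∀ i, x i ∈ A i) ∧ Function.Injective x ∧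
          MvPolynomial.eval x f = y}.ncard : ℕ∞) := by
  classical
  set S : Set F := {y : F | ∃ x : Fin n → F, (∀ i, x i ∈ A i) ∧ Function.Injective x ∧
          MvPolynomial.eval x f = y} with hS
  have hfin : S.Finite := by
    apply ((Fintype.piFinset A).image (fun x => eval x f)).finite_toSet.subset
    rintro y ⟨x, hx, _, rfl⟩
    simp only [Finset.coe_image, Set.mem_image, Finset.mem_coe, Fintype.mem_piFinset]
    exact ⟨x, hx, rfl⟩
  by_contra hcon
  rw [not_le, lt_min_iff, Set.ncard_eq_toFinset_card _ hfin] at hcon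
  set D := hfin.toFinset with hD
  obtain ⟨hc1, hc2⟩ := hcon
  have hc2' : D.card < ∑ i, q i + 1 := by exact_mod_cast hc2
  have hfac : ((D.card.factorial : ℕ) : F) ≠ 0 := by
    rw [Ne, ringChar.spec]
    rcases CharP.char_is_prime_or_zero F (ringChar F) with h | h
    · rw [h.dvd_factorial, not_le]
      rw [if_neg h.ne_zero] at hc1
      exact_mod_cast hc1
    · rw [h, zero_dvd_iff]
      exact Nat.factorial_ne_zero _
  have hqmono : ∀ i j : Fin n, i ≤ j → j.1 % k = i.1 % k → q i ≤ q j := by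
    intro i j hij hm
    have h1 := Nat.sInf_mem (s := {c : ℕ | ∃ l : Fin n, j ≤ l ∧ l.1 % k = j.1 % k ∧
        c = ((A l).card - (l.1 + 1)) / k}) ⟨_, j, le_rfl, rfl, rfl⟩
    rw [← hq j] at h1
    obtain ⟨l, h2, h3, h4⟩ := h1
    rw [hq i]
    exact Nat.sInf_le ⟨l, hij.trans h2, h3.trans hm, h4⟩
  have hqle : ∀ i, k * q i + i.1 < (A i).card := by
    intro i
    have h1 : q i ≤ ((A i).card - (i.1 + 1)) / k := by
      rw [hq i]
      exact Nat.sInf_le ⟨i, le_rfl, rfl, rfl⟩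
    have h2 := (Nat.mul_le_mul_left k h1).trans (Nat.mul_div_le _ _)
    have := hA i
    omega
  obtain ⟨q', hq'le, hq's, hq'm⟩ := aux_reduce k D.card (∑ i, q i - D.card) q (by omega) hqmono
  let d : Fin n →₀ ℕ := Finsupp.equivFunOnFinite.symm (fun i => k * q' i + i.1)
  have hd : ∀ i, d i = k * q' i + i.1 := fun i => rfl
  have hdA : ∀ i, d i < (A i).card := by
    intro i
    rw [hd]
    have := Nat.mul_le_mul_left k (hq'le i)
    have := hqle i
    omega
  have hdsum : d.degree = k * D.card + ∑ i : Fin n, i.1 := by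
    rw [Finsupp.degree_eq_sum, ← hq's, Finset.mul_sum, ← Finset.sum_add_distrib]
    rfl
  have hcZ := aux_coeff_dvd k hk1 hkn q' hq'm d hd
  rw [hq's] at hcZ
  set V := (Matrix.vandermonde (X : Fin n → MvPolynomial (Fin n) F)).det with hV
  set p := ∑ i : Fin n, (X i : MvPolynomial (Fin n) F) ^ k with hp
  have hcF : coeff d (V * p ^ D.card) ≠ 0 := by
    have hmap : V * p ^ D.card = map (Int.castRingHom F)
        ((Matrix.vandermonde (X : Fin n → MvPolynomial (Fin n) ℤ)).det *
        (∑ i : Fin n, (X i : MvPolynomial (Fin n) ℤ) ^ k) ^ D.card) := by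
      rw [map_mul, map_pow, map_sum, RingHom.map_det, hV, hp]
      congr 2
      · ext i j
        simp [Matrix.vandermonde_apply]
      · simp
    rw [hmap, coeff_map]
    intro h0
    obtain ⟨H, hH⟩ := hcZ
    apply hfac
    have h1 := congrArg (Int.castRingHom F) hH
    rw [map_mul, h0, zero_mul] at h1
    simpa using h1
  have hpdeg : p.totalDegree ≤ k := by
    apply totalDegree_finsetSum_le
    intro i _
    rw [totalDegree_X_pow]
  have hgc : ∀ c, (g - C c).totalDegree < k := by
    intro c
    exact lt_of_le_of_lt (totalDegree_sub_C_le _ _) hg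
  obtain ⟨R, hR1, hR2⟩ := aux_prod_expand k p hpdeg (fun c => g - C c) hgc D
  have hprod : ∏ c ∈ D, (p + (g - C c)) = ∏ c ∈ D, (f - C c) := by
    apply Finset.prod_congr rfl
    intro c _
    rw [hf, add_sub_assoc]
  rw [hprod] at hR1
  have hVdeg : V.totalDegree ≤ ∑ i : Fin n, i.1 := aux_vdm_degree
  have hVR : coeff d (V * R) = 0 := by
    rcases hR2 with h | h
    · rw [h, mul_zero, coeff_zero]
    · apply coeff_eq_zero_of_totalDegree_lt
      have h1 := totalDegree_mul V R
      have h2 : ∑ i ∈ d.support, d i = d.degree := rfl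
      omega
  have hcoeff : coeff d (V * ∏ c ∈ D, (f - C c)) ≠ 0 := by
    rw [hR1, mul_add, coeff_add, hVR, add_zero]
    exact hcF
  have hdeg : (V * ∏ c ∈ D, (f - C c)).totalDegree = d.degree := by
    apply le_antisymm
    · have h1 := totalDegree_mul V (∏ c ∈ D, (f - C c))
      have h2 : (∏ c ∈ D, (f - C c)).totalDegree ≤ k * D.card := by
        refine (totalDegree_finsetProd _ _).trans ?_
        rw [mul_comm, ← smul_eq_mul]
        apply Finset.sum_le_card_nsmul
        intro c _
        refine (totalDegree_sub_C_le _ _).trans ?_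
        rw [hf]
        exact (totalDegree_add _ _).trans (max_le hpdeg hg.le)
      omega
    · exact le_totalDegree (mem_support_iff.2 hcoeff)
  obtain ⟨x, hxA, hx⟩ := combinatorial_nullstellensatz_exists_eval_nonzero _ d hcoeff hdeg A hdA
  rw [map_mul, map_prod] at hx
  have hinj : Function.Injective x := by
    rw [← Matrix.det_vandermonde_ne_zero_iff]
    have h1 := left_ne_zero_of_mul hx
    rw [hV, RingHom.map_det] at h1
    convert h1 using 2
    ext i j
    simp [Matrix.vandermonde_apply]
  have h2 := right_ne_zero_of_mul hx
  rw [Finset.prod_ne_zero_iff] at h2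
  refine h2 (eval x f) ?_ (by simp)
  rw [hD, Set.Finite.mem_toFinset]
  exact ⟨x, hxA, hinj, rfl⟩
end

section
/- Let F be a field of characteristic 0 or of prime characteristic p, and let A be a finite subset of F. For n ≥ 1, |{ x₁ + ⋯ + xₙ : x₁,…,xₙ ∈ A pairwise distinct }| ≥ min{ p(F), n(|A| − n) + 1 }. -/
open MvPolynomial Finset in
lemma aux_coeff_sum_pow (n m : ℕ) (d : Fin n →₀ ℕ) (hd : ∑ i, d i = m) :
    coeff d ((∑ i, X i : MvPolynomial (Fin n) ℤ) ^ m) * ∏ i, ((d i).factorial : ℤ)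
      = (m.factorial : ℤ) := by
  classical
  have hmon : ∀ k : Fin n → ℕ, (∏ i, (X i : MvPolynomial (Fin n) ℤ) ^ k i)
      = monomial (Finsupp.equivFunOnFinite.symm k) 1 := by
    intro k
    rw [MvPolynomial.monomial_eq, Finsupp.prod_fintype _ _ (by simp)]
    simp
  have h1 : coeff d ((∑ i, X i : MvPolynomial (Fin n) ℤ) ^ m)
      = (Nat.multinomial univ (d : Fin n → ℕ) : ℤ) := by
    rw [Finset.sum_pow_eq_sum_piAntidiag, coeff_sum, Finset.sum_eq_single (d : Fin n → ℕ)]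
    · rw [hmon, ← map_natCast (C : ℤ →+* MvPolynomial (Fin n) ℤ), coeff_C_mul, coeff_monomial]
      simp
    · intro b _ hb
      rw [hmon, ← map_natCast (C : ℤ →+* MvPolynomial (Fin n) ℤ), coeff_C_mul, coeff_monomial,
        if_neg, mul_zero]
      rintro rfl
      exact hb (by ext; simp)
    · intro h
      exact absurd (by simp [hd]) h
  rw [h1]
  have := Nat.multinomial_spec univ (d : Fin n → ℕ)
  rw [hd] at this
  rw [← this]
  push_cast
  ring

open MvPolynomial Finset in
lemma aux_coeff_term (n m : ℕ) (c : Fin n →₀ ℕ) (e : Fin n → ℕ)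
    (hc : ∑ i, c i = m + ∑ i, e i) :
    coeff c ((∏ i, (X i : MvPolynomial (Fin n) ℤ) ^ e i) * (∑ i, X i) ^ m)
      * ∏ i, ((c i).factorial : ℤ)
      = (m.factorial : ℤ) * ∏ i, ((c i).descFactorial (e i) : ℤ) := by
  classical
  have hmon : (∏ i, (X i : MvPolynomial (Fin n) ℤ) ^ e i)
      = monomial (Finsupp.equivFunOnFinite.symm e) 1 := by
    rw [MvPolynomial.monomial_eq, Finsupp.prod_fintype _ _ (by simp)]
    simp
  rw [hmon, coeff_monomial_mul']
  split_ifs with h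
  · have hle : ∀ i, e i ≤ c i := fun i => by simpa using h i
    have hs : ∑ i, (c - Finsupp.equivFunOnFinite.symm e) i = m := by
      have : ∑ i, (c - Finsupp.equivFunOnFinite.symm e) i + ∑ i, e i = ∑ i, c i := by
        rw [← Finset.sum_add_distrib]
        refine Finset.sum_congr rfl fun i _ => ?_
        simp [hle i]
      omega
    rw [← aux_coeff_sum_pow n m _ hs, one_mul, mul_assoc, ← Finset.prod_mul_distrib]
    congr 1
    refine Finset.prod_congr rfl fun i _ => ?_
    rw [← Nat.factorial_mul_descFactorial (hle i)]
    simp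
  · have : ∃ i, c i < e i := by
      by_contra! hcon
      exact h fun i => by simpa using hcon i
    obtain ⟨i, hi⟩ := this
    have h0 : ∏ i, ((c i).descFactorial (e i) : ℤ) = 0 :=
      Finset.prod_eq_zero (mem_univ i) (by simp [Nat.descFactorial_eq_zero_iff_lt.2 hi])
    rw [h0]
    simp

open MvPolynomial Finset in
lemma aux_coeff_main (n m : ℕ) (c : Fin n →₀ ℕ) (hc : ∑ i, c i = m + ∑ i : Fin n, (i : ℕ)) :
    coeff c ((Matrix.vandermonde (X : Fin n → MvPolynomial (Fin n) ℤ)).det * (∑ i, X i) ^ m)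
      * ∏ i, ((c i).factorial : ℤ)
      = (m.factorial : ℤ) * ∏ i : Fin n, ∏ j ∈ Ioi i, ((c j : ℤ) - c i) := by
  classical
  rw [← Matrix.det_vandermonde (fun i => (c i : ℤ)),
    Matrix.det_eval_matrixOfPolynomials_eq_det_vandermonde (fun i => (c i : ℤ))
      (fun i => descPochhammer ℤ i) (fun i => descPochhammer_natDegree ℤ i)
      (fun i => monic_descPochhammer ℤ i), ← Matrix.det_transpose (Matrix.vandermonde _),
      ← Matrix.det_transpose (Matrix.of _), Matrix.det_apply', Matrix.det_apply',
      Finset.sum_mul, coeff_sum, Finset.sum_mul, Finset.mul_sum]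
  refine Finset.sum_congr rfl fun σ _ => ?_
  have := aux_coeff_term n m c (fun i => (σ i : ℕ)) (by
    rw [hc, Equiv.sum_comp σ (fun i : Fin n => (i : ℕ))])
  simp only [Matrix.transpose_apply, Matrix.vandermonde_apply, Matrix.of_apply,
    descPochhammer_eval_eq_descFactorial]
  rw [← map_intCast (C : ℤ →+* MvPolynomial (Fin n) ℤ), mul_assoc, coeff_C_mul, mul_assoc, this]
  simp only [Int.cast_id]
  ring

open MvPolynomial Finset in
lemma aux_core {F : Type*} [Field F] (n m : ℕ) (A S : Finset F) (c : Fin n →₀ ℕ)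
    (hc : ∑ i, c i = m + ∑ i : Fin n, (i : ℕ)) (hcA : ∀ i, c i < A.card)
    (hne : (m.factorial : F) * ∏ i : Fin n, ∏ j ∈ Ioi i, ((c j : F) - c i) ≠ 0)
    (hS : ∀ x : Fin n → F, (∀ i, x i ∈ A) → Function.Injective x → ∑ i, x i ∈ S) :
    m < S.card := by
  classical
  by_contra! hm
  set V : MvPolynomial (Fin n) F :=
    (Matrix.vandermonde (X : Fin n → MvPolynomial (Fin n) F)).det with hV
  set Y : MvPolynomial (Fin n) F := ∑ i, X i with hY
  have hYh : Y.IsHomogeneous 1 := IsHomogeneous.sum _ _ _ fun i _ => isHomogeneous_X _ _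
  have hVh : V.IsHomogeneous (∑ i : Fin n, (i : ℕ)) := by
    rw [hV, ← Matrix.det_transpose, Matrix.det_apply']
    refine IsHomogeneous.sum _ _ _ fun σ _ => ?_
    rw [← map_intCast (C : F →+* MvPolynomial (Fin n) F)]
    refine IsHomogeneous.C_mul ?_ _
    rw [← Equiv.sum_comp σ (fun i : Fin n => (i : ℕ))]
    refine IsHomogeneous.prod _ _ _ fun i _ => ?_
    simpa using isHomogeneous_X_pow (R := F) i (σ i : ℕ)
  have hVY : ∀ k, (V * Y ^ k).IsHomogeneous (∑ i : Fin n, (i : ℕ) + k) := fun k => by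
    simpa using hVh.mul (hYh.pow k)
  have hdeg : c.degree = m + ∑ i : Fin n, (i : ℕ) := by
    rw [← hc, Finsupp.degree_eq_sum]
  have hcoef : coeff c (V * Y ^ m) ≠ 0 := by
    have hmap : V * Y ^ m = map (Int.castRingHom F)
        ((Matrix.vandermonde (X : Fin n → MvPolynomial (Fin n) ℤ)).det * (∑ i, X i) ^ m) := by
      simp [hV, hY, Matrix.det_vandermonde]
    intro h0
    rw [hmap, coeff_map] at h0
    have h1 := congrArg (Int.castRingHom F) (aux_coeff_main n m c hc)
    rw [map_mul, h0, zero_mul] at h1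
    apply hne
    rw [h1]
    simp
  set g : Polynomial F := (∏ s ∈ S, (Polynomial.X - Polynomial.C s)) * Polynomial.X ^ (m - S.card)
    with hg
  have hgm : g.Monic := (Polynomial.monic_prod_of_monic _ _ fun s _ =>
    Polynomial.monic_X_sub_C s).mul (Polynomial.monic_X_pow _)
  have hgd : g.natDegree = m := by
    rw [hg, Polynomial.Monic.natDegree_mul (Polynomial.monic_prod_of_monic _ _ fun s _ =>
      Polynomial.monic_X_sub_C s) (Polynomial.monic_X_pow _),
      Polynomial.natDegree_prod_of_monic _ _ fun s _ => Polynomial.monic_X_sub_C s]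
    simp
    omega
  have hf : V * Polynomial.aeval Y g
      = ∑ k ∈ range (m + 1), C (g.coeff k) * (V * Y ^ k) := by
    rw [Polynomial.aeval_eq_sum_range, hgd, Finset.mul_sum]
    refine Finset.sum_congr rfl fun k _ => ?_
    rw [MvPolynomial.smul_eq_C_mul]
    ring
  have hfc : coeff c (V * Polynomial.aeval Y g) ≠ 0 := by
    rw [hf, coeff_sum, Finset.sum_eq_single m]
    · rw [coeff_C_mul, ← hgd, hgm.coeff_natDegree, hgd, one_mul]
      exact hcoef
    · intro k _ hk
      rw [coeff_C_mul, (hVY k).coeff_eq_zero, mul_zero]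
      omega
    · simp
  have hftd : (V * Polynomial.aeval Y g).totalDegree = c.degree := by
    apply le_antisymm
    · rw [hf]
      refine totalDegree_finsetSum_le fun k hk => ?_
      refine (((hVY k).C_mul _).totalDegree_le).trans ?_
      have := Finset.mem_range.1 hk
      omega
    · have := le_totalDegree (mem_support_iff.2 hfc)
      rwa [Finsupp.degree_apply]
  obtain ⟨x, hx, hxe⟩ := combinatorial_nullstellensatz_exists_eval_nonzero _ c hfc hftd
    (fun _ => A) hcA
  rw [map_mul] at hxe
  have hx1 := left_ne_zero_of_mul hxe
  have hx2 := right_ne_zero_of_mul hxe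
  have hinj : Function.Injective x := by
    rw [← Matrix.det_vandermonde_ne_zero_iff]
    convert hx1 using 1
    simp [hV, Matrix.det_vandermonde]
  have hmem := hS x hx hinj
  apply hx2
  have : eval x (Polynomial.aeval Y g) = g.eval (∑ i, x i) := by
    have h2 := Polynomial.hom_eval₂ g (algebraMap F (MvPolynomial (Fin n) F)) (eval x) Y
    rw [Polynomial.aeval_def, h2, Polynomial.eval]
    congr 1
    · ext; simp
    · simp [hY]
  rw [this, hg, Polynomial.eval_mul, Polynomial.eval_prod, Finset.prod_eq_zero hmem
    (by rw [Polynomial.eval_sub, Polynomial.eval_X, Polynomial.eval_C, sub_self]),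
    zero_mul]

open Finset in
lemma aux_core2 {F : Type*} [Field F] (n m : ℕ) (hn : 1 ≤ n) (A S : Finset F)
    (hA : n ≤ A.card) (hm : m ≤ n * (A.card - n))
    (h1 : ∀ j : ℕ, 0 < j → j ≤ n → (j : F) ≠ 0) (h2 : (m.factorial : F) ≠ 0)
    (hS : ∀ T ⊆ A, T.card = n → ∑ x ∈ T, x ∈ S) :
    m < S.card := by
  classical
  have hmod := Nat.div_add_mod m n
  have hr : m % n < n := Nat.mod_lt _ hn
  set q := m / n
  set r := m % n
  set c : Fin n →₀ ℕ := Finsupp.equivFunOnFinite.symm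
    (fun i : Fin n => (i : ℕ) + q + if n - r ≤ (i : ℕ) then 1 else 0) with hcdef
  have hci : ∀ i : Fin n, c i = (i : ℕ) + q + if n - r ≤ (i : ℕ) then 1 else 0 := fun i => rfl
  refine aux_core n m A S c ?_ ?_ ?_ ?_
  · simp only [hci, Finset.sum_add_distrib]
    have : ∑ i : Fin n, (if n - r ≤ (i : ℕ) then 1 else 0) = r := by
      rw [Fin.sum_univ_eq_sum_range (fun i => if n - r ≤ i then 1 else 0) n, ← Finset.card_filter]
      have : (range n).filter (fun i => n - r ≤ i) = Ico (n - r) n := by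
        ext i; simp; omega
      rw [this, Nat.card_Ico]; omega
    rw [this]
    simp
    omega
  · intro i
    have hi := i.2
    rw [hci]
    obtain ⟨k, hk⟩ := Nat.exists_eq_add_of_le hA
    rw [hk] at hm ⊢
    rw [Nat.add_sub_cancel_left] at hm
    have hq : q ≤ k := by
      by_contra! h
      nlinarith
    split_ifs with h
    · have hq' : q ≠ k := by
        rintro h'
        rw [h'] at hmod
        omega
      omega
    · omega
  · refine mul_ne_zero h2 (Finset.prod_ne_zero_iff.2 fun i _ => Finset.prod_ne_zero_iff.2
      fun j hj => ?_)
    have hij : (i : ℕ) < j := Fin.lt_def.1 (Finset.mem_Ioi.1 hj)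
    have hjn := j.2
    have hle : c i < c j ∧ c j - c i ≤ n := by
      rw [hci, hci]
      split_ifs <;> omega
    rw [← Nat.cast_sub hle.1.le]
    exact h1 _ (by omega) hle.2
  · intro x hx hinj
    have := hS (univ.image x) (by intro y; simp; rintro i rfl; exact hx i)
      (by rw [Finset.card_image_of_injective _ hinj]; simp)
    rwa [Finset.sum_image (fun _ _ _ _ h => hinj h)] at this

theorem stmt_5 {F : Type*} [Field F] (n : ℕ) (hn : 1 ≤ n)
    (A : Finset F) (hA : n ≤ A.card) :
    min (if ringChar F = 0 then (⊤ : ℕ∞) else (ringChar F : ℕ∞))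
        ((n * (A.card - n) + 1 : ℕ)) ≤
      ({y : F | ∃ x : Fin n → F, (∀ i, x i ∈ A) ∧ Function.Injective x ∧
          (∑ i, x i) = y}.ncard : ℕ∞) := by
  classical
  set S : Finset F := (A.powersetCard n).image (fun T => ∑ x ∈ T, x) with hSdef
  have hset : {y : F | ∃ x : Fin n → F, (∀ i, x i ∈ A) ∧ Function.Injective x ∧
          (∑ i, x i) = y} = (S : Set F) := by
    ext y
    simp only [Set.mem_ofPred_eq, hSdef, Finset.coe_image, Set.mem_image, Finset.mem_coe,
      Finset.mem_powersetCard]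
    constructor
    · rintro ⟨x, hx, hinj, rfl⟩
      refine ⟨Finset.univ.image x, ⟨by intro y; simp; rintro i rfl; exact hx i, ?_⟩, ?_⟩
      · rw [Finset.card_image_of_injective _ hinj]; simp
      · rw [Finset.sum_image (fun _ _ _ _ h => hinj h)]
    · rintro ⟨T, ⟨hT, hc⟩, rfl⟩
      refine ⟨fun i => ((T.equivFinOfCardEq hc).symm i : F), fun i => hT (Subtype.prop _),
        fun a b h => (T.equivFinOfCardEq hc).symm.injective (Subtype.ext h), ?_⟩
      rw [Equiv.sum_comp (T.equivFinOfCardEq hc).symm (fun t : T => (t : F))]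
      exact Finset.sum_coe_sort T (fun x => x)
  have hS : ∀ T ⊆ A, T.card = n → ∑ x ∈ T, x ∈ S := fun T hT hc =>
    Finset.mem_image.2 ⟨T, Finset.mem_powersetCard.2 ⟨hT, hc⟩, rfl⟩
  rw [hset, Set.ncard_coe_finset]
  by_contra! hlt
  rw [lt_min_iff] at hlt
  obtain ⟨hl1, hl2⟩ := hlt
  have hl2 : S.card ≤ n * (A.card - n) := by
    have : S.card < n * (A.card - n) + 1 := by exact_mod_cast hl2
    omega
  have hchar := ringChar.charP F
  rcases CharP.char_is_prime_or_zero F (ringChar F) with hp | hp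
  · rw [if_neg hp.ne_zero] at hl1
    have hl1 : S.card < ringChar F := by exact_mod_cast hl1
    generalize ringChar F = p at *
    have hcast : ∀ j : ℕ, 0 < j → j < p → (j : F) ≠ 0 := fun j h0 hj h => by
      rw [CharP.cast_eq_zero_iff F p] at h
      exact absurd (Nat.le_of_dvd h0 h) (by omega)
    have hfac : (S.card.factorial : F) ≠ 0 := fun h => by
      rw [CharP.cast_eq_zero_iff F p, hp.dvd_factorial] at h
      omega
    by_cases hnp : n < p
    · exact lt_irrefl _ (aux_core2 n S.card hn A S hA hl2
        (fun j h0 hj => hcast j h0 (by omega)) hfac hS)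
    · have hp2 := hp.two_le
      have hk : n < A.card := by
        rcases hA.lt_or_eq with h | h
        · exact h
        · have : S.card = 0 := by simpa [← h] using hl2
          have h3 := hS A subset_rfl h.symm
          rw [Finset.card_eq_zero.1 this] at h3
          simp at h3
      obtain ⟨B, hB, hBc⟩ := Finset.exists_subset_card_eq (s := A) (n := n - (p - 1)) (by omega)
      have hAB : (A \ B).card = A.card - n + (p - 1) := by
        rw [Finset.card_sdiff_of_subset hB]; omega
      have hcard : (S.image (fun y => y - ∑ x ∈ B, x)).card = S.card :=
        Finset.card_image_of_injective _ (sub_left_injective)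
      have := aux_core2 (p - 1) S.card (by omega) (A \ B) (S.image (fun y => y - ∑ x ∈ B, x))
        (by omega) (by
          rw [hAB, Nat.add_sub_cancel]
          calc S.card ≤ (p - 1) * 1 := by omega
            _ ≤ _ := Nat.mul_le_mul_left _ (by omega))
        (fun j h0 hj => hcast j h0 (by omega)) hfac (by
          intro T hT hTc
          have hd : Disjoint T B := Finset.disjoint_of_subset_left hT Finset.sdiff_disjoint
          refine Finset.mem_image.2 ⟨∑ x ∈ T ∪ B, x, hS _ ?_ ?_, ?_⟩
          · exact Finset.union_subset (hT.trans Finset.sdiff_subset) hB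
          · rw [Finset.card_union_of_disjoint hd]; omega
          · rw [Finset.sum_union hd]; ring)
      omega
  · rw [hp] at hchar
    have : CharZero F := CharP.charP_to_charZero F
    refine lt_irrefl _ (aux_core2 n S.card hn A S hA hl2
      (fun j h0 _ => by exact_mod_cast h0.ne') ?_ hS)
    exact_mod_cast Nat.factorial_ne_zero _
end

section
/- Let A₁,…,Aₙ be finite subsets of a field F with 0 < |A₁| < |A₂| < ⋯ < |Aₙ|. Then |{ x₁ + ⋯ + xₙ : xᵢ ∈ Aᵢ for all i, and xᵢ ≠ x_j whenever i ≠ j }| ≥ min{ p(F), 1 + Σ_{i=1}^n (|Aᵢ| − i) }. -/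
open MvPolynomial in
/-- Coefficients of powers of the sum of the variables. -/
lemma anr_coeff_sum_pow {n : ℕ} (M : ℕ) (d : Fin n →₀ ℕ) (hd : ∑ i, d i = M) :
    coeff d ((∑ i : Fin n, (X i : MvPolynomial (Fin n) ℤ)) ^ M) * (∏ i, ((d i).factorial : ℤ))
      = (M.factorial : ℤ) := by
  classical
  have hmon : ∀ k : Fin n → ℕ, (∏ i, (X i : MvPolynomial (Fin n) ℤ) ^ k i)
      = monomial (Finsupp.equivFunOnFinite.symm k) 1 := by
    intro k
    rw [monomial_eq, Finsupp.prod_fintype _ _ (by simp)]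
    simp
  rw [Finset.sum_pow_eq_sum_piAntidiag, coeff_sum,
    Finset.sum_eq_single (d : Fin n → ℕ)]
  · rw [hmon, ← map_natCast (C : ℤ →+* MvPolynomial (Fin n) ℤ), coeff_C_mul, coeff_monomial]
    have : Finsupp.equivFunOnFinite.symm (d : Fin n → ℕ) = d := by ext; simp
    rw [if_pos this, mul_one, ← hd, ← Nat.multinomial_spec Finset.univ d]
    push_cast
    ring
  · intro k _ hk
    rw [hmon, ← map_natCast (C : ℤ →+* MvPolynomial (Fin n) ℤ), coeff_C_mul, coeff_monomial]
    rw [if_neg, mul_zero]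
    intro h
    apply hk
    rw [← h]
    ext; simp
  · intro h
    exact absurd (by simp [Finset.mem_piAntidiag, hd]) h

open MvPolynomial in
lemma anr_coeff_term {n : ℕ} (M : ℕ) (c : Fin n →₀ ℕ) (e : Fin n → ℕ)
    (hd : ∑ i, c i = M + ∑ i, e i) :
    coeff c ((∏ i, (X i : MvPolynomial (Fin n) ℤ) ^ e i) *
      (∑ i : Fin n, (X i : MvPolynomial (Fin n) ℤ)) ^ M) * (∏ i, ((c i).factorial : ℤ))
      = (M.factorial : ℤ) * ∏ i, ((c i).descFactorial (e i) : ℤ) := by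
  classical
  have hmon : (∏ i, (X i : MvPolynomial (Fin n) ℤ) ^ e i)
      = monomial (Finsupp.equivFunOnFinite.symm e) 1 := by
    rw [monomial_eq, Finsupp.prod_fintype _ _ (by simp)]
    simp
  rw [hmon, coeff_monomial_mul']
  split_ifs with h
  · have h' : ∀ i, e i ≤ c i := fun i => by simpa using h i
    have hs : ∑ i, (c - Finsupp.equivFunOnFinite.symm e) i = M := by
      have : ∑ i, (c - Finsupp.equivFunOnFinite.symm e) i + ∑ i, e i = ∑ i, c i := by
        rw [← Finset.sum_add_distrib]
        apply Finset.sum_congr rfl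
        intro i _
        have := h' i
        simp
        omega
      omega
    have := anr_coeff_sum_pow M _ hs
    rw [one_mul, ← this, mul_assoc, ← Finset.prod_mul_distrib]
    congr 1
    apply Finset.prod_congr rfl
    intro i _
    rw [← Nat.factorial_mul_descFactorial (h' i)]
    simp
  · have : ∃ i, c i < e i := by
      by_contra! hc
      exact h (fun i => by simpa using hc i)
    obtain ⟨i, hi⟩ := this
    rw [zero_mul, Finset.prod_eq_zero (Finset.mem_univ i), mul_zero]
    exact_mod_cast Nat.descFactorial_eq_zero_iff_lt.mpr hi

open MvPolynomial in
lemma anr_coeff_vand {n : ℕ} (M : ℕ) (c : Fin n →₀ ℕ)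
    (hd : ∑ i, c i = M + ∑ i : Fin n, (i : ℕ)) :
    coeff c ((Matrix.vandermonde (fun i : Fin n => (X i : MvPolynomial (Fin n) ℤ))).det *
      (∑ i : Fin n, (X i : MvPolynomial (Fin n) ℤ)) ^ M) * (∏ i, ((c i).factorial : ℤ))
      = (M.factorial : ℤ) * (Matrix.vandermonde (fun i => (c i : ℤ))).det := by
  classical
  rw [Matrix.det_eval_matrixOfPolynomials_eq_det_vandermonde (fun i => (c i : ℤ))
    (fun j => descPochhammer ℤ j) (fun i => descPochhammer_natDegree ℤ i)
    (fun i => monic_descPochhammer ℤ i)]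
  rw [← Matrix.det_transpose, Matrix.det_apply', ← Matrix.det_transpose (Matrix.of _),
    Matrix.det_apply', Finset.sum_mul, coeff_sum, Finset.sum_mul, Finset.mul_sum]
  apply Finset.sum_congr rfl
  intro σ _
  have hσ : ∑ i, c i = M + ∑ i : Fin n, ((σ i : Fin n) : ℕ) := by
    rw [hd, Equiv.sum_comp σ (fun i : Fin n => (i : ℕ))]
  have := anr_coeff_term M c (fun i => (σ i : ℕ)) hσ
  have hz : ((Equiv.Perm.sign σ : ℤ) : MvPolynomial (Fin n) ℤ) = C ((Equiv.Perm.sign σ : ℤ)) := by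
    simp
  rw [hz, mul_assoc (C _), coeff_C_mul, mul_assoc]
  simp only [Matrix.transpose_apply, Matrix.vandermonde_apply, Matrix.of_apply,
    descPochhammer_eval_eq_descFactorial]
  rw [this, Int.cast_id]
  ring

lemma anr_le {n : ℕ} (c : Fin n → ℕ) (hc : StrictMono c) (i : Fin n) : (i : ℕ) ≤ c i := by
  obtain ⟨i, hi⟩ := i
  induction i with
  | zero => simp
  | succ k ih =>
    have h1 := ih (by omega)
    have h2 : c ⟨k, by omega⟩ < c ⟨k + 1, hi⟩ := hc (by simp)
    simp only at *
    omega

lemma anr_dvd {n : ℕ} (c : Fin n → ℕ) (hc : StrictMono c) :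
    (Matrix.vandermonde (fun i => (c i : ℤ))).det ∣ ∏ i, ((c i).factorial : ℤ) := by
  classical
  rw [Matrix.det_vandermonde]
  rw [Finset.prod_comm' (t' := Finset.univ) (s' := fun j => Finset.Iio j) (by simp)]
  apply Finset.prod_dvd_prod_of_dvd
  intro j _
  have h1 : ∏ i ∈ Finset.Iio j, ((c j : ℤ) - c i)
      = ((∏ k ∈ (Finset.Iio j).image (fun i => c j - c i), k : ℕ) : ℤ) := by
    rw [Finset.prod_image]
    · push_cast
      apply Finset.prod_congr rfl
      intro i hi
      have := hc (Finset.mem_Iio.mp hi)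
      omega
    · intro a ha b hb hab
      have h1 := hc (Finset.mem_Iio.mp (Finset.mem_coe.mp ha))
      have h2 := hc (Finset.mem_Iio.mp (Finset.mem_coe.mp hb))
      apply hc.injective
      simp only at hab
      omega
  have h2 : ∀ k : ℕ, ∏ x ∈ Finset.Icc 1 k, x = k.factorial := by
    intro k
    induction k with
    | zero => simp
    | succ k ih => rw [Finset.prod_Icc_succ_top (by omega), ih, Nat.factorial_succ, mul_comm]
  rw [h1, ← h2]
  apply Int.natCast_dvd_natCast.mpr
  apply Finset.prod_dvd_prod_of_subset
  intro k hk
  obtain ⟨i, hi, rfl⟩ := Finset.mem_image.mp hk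
  have := hc (Finset.mem_Iio.mp hi)
  rw [Finset.mem_Icc]
  omega

open MvPolynomial in
lemma anr_coeff_dvd {n : ℕ} (M : ℕ) (c : Fin n →₀ ℕ) (hc : StrictMono c)
    (hd : ∑ i, c i = M + ∑ i : Fin n, (i : ℕ)) :
    coeff c ((Matrix.vandermonde (fun i : Fin n => (X i : MvPolynomial (Fin n) ℤ))).det *
      (∑ i : Fin n, (X i : MvPolynomial (Fin n) ℤ)) ^ M) ∣ (M.factorial : ℤ) := by
  obtain ⟨H, hH⟩ := anr_dvd c hc
  have h := anr_coeff_vand M c hd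
  have hne : ∏ i, ((c i).factorial : ℤ) ≠ 0 :=
    Finset.prod_ne_zero_iff.mpr fun i _ => by exact_mod_cast Nat.factorial_ne_zero _
  have hV : (Matrix.vandermonde (fun i => (c i : ℤ))).det ≠ 0 := by
    intro h0
    rw [h0, zero_mul] at hH
    exact hne hH
  refine ⟨H, ?_⟩
  apply mul_right_cancel₀ hV
  rw [← h, hH]
  ring

lemma anr_shrink {n : ℕ} (M d : ℕ) : ∀ (c : Fin n → ℕ), StrictMono c →
    ∑ i, c i = M + ∑ i : Fin n, (i : ℕ) + d →
    ∃ c' : Fin n → ℕ, StrictMono c' ∧ (∀ i, c' i ≤ c i) ∧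
      ∑ i, c' i = M + ∑ i : Fin n, (i : ℕ) := by
  classical
  induction d with
  | zero => exact fun c hc h => ⟨c, hc, fun _ => le_rfl, by simpa using h⟩
  | succ d ih =>
    intro c hc h
    have hle : ∀ i : Fin n, (i : ℕ) ≤ c i := anr_le c hc
    have hex : (Finset.univ.filter fun i : Fin n => (i : ℕ) < c i).Nonempty := by
      by_contra hne
      rw [Finset.not_nonempty_iff_eq_empty, Finset.filter_eq_empty_iff] at hne
      have : ∑ i, c i ≤ ∑ i : Fin n, (i : ℕ) :=
        Finset.sum_le_sum fun i hi => not_lt.mp (hne hi)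
      omega
    obtain ⟨i, hi, hmin⟩ := Finset.exists_min_image _ id hex
    have hi' : (i : ℕ) < c i := (Finset.mem_filter.mp hi).2
    have hlow : ∀ j < i, c j = j := by
      intro j hj
      by_contra hne
      have : (j : ℕ) < c j := lt_of_le_of_ne (hle j) (Ne.symm hne)
      exact absurd (hmin j (by simp [this])) (not_le.mpr hj)
    obtain ⟨c', h1, h2, h3⟩ := ih (Function.update c i (c i - 1)) (by
      intro a b hab
      have h1 := hc hab
      by_cases ha : a = i
      · subst ha
        have : b ≠ a := hab.ne'
        simp [this]
        omega
      · by_cases hb : b = i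
        · subst hb
          have := hlow a hab
          have : (a : ℕ) < b := hab
          simp [ha]
          omega
        · simp [ha, hb, h1]) (by
      have e1 : c i + ∑ x ∈ Finset.univ.erase i, c x = ∑ x, c x :=
        Finset.add_sum_erase Finset.univ c (Finset.mem_univ i)
      rw [← Finset.add_sum_erase _ _ (Finset.mem_univ i)]
      rw [Finset.sum_congr rfl (g := fun j => c j) (fun j hj => by
        simp [(Finset.mem_erase.mp hj).1])]
      simp
      omega)
    refine ⟨c', h1, fun j => (h2 j).trans ?_, h3⟩
    by_cases hj : j = i
    · subst hj; simp
    · simp [hj]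

open MvPolynomial in
lemma anr_main {F : Type*} [Field F] {n : ℕ} (A : Fin n → Finset F) (M : ℕ) (c : Fin n → ℕ)
    (hc : StrictMono c) (hcA : ∀ i, c i < (A i).card)
    (hd : ∑ i, c i = M + ∑ i : Fin n, (i : ℕ)) (hM : (M.factorial : F) ≠ 0)
    (S : Finset F) (hS : ∀ x : Fin n → F, (∀ i, x i ∈ A i) → Function.Injective x →
      ∑ i, x i ∈ S) : M < S.card := by
  classical
  by_contra! hcard
  set t : Fin n →₀ ℕ := Finsupp.equivFunOnFinite.symm c with ht
  have htc : (t : Fin n → ℕ) = c := by ext; simp [ht]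
  have hdeg : t.degree = M + ∑ i : Fin n, (i : ℕ) := by
    rw [Finsupp.degree_eq_sum, htc, hd]
  set V : MvPolynomial (Fin n) F := (Matrix.vandermonde (fun i : Fin n => X i)).det with hV
  set s : MvPolynomial (Fin n) F := ∑ i, X i with hs
  have hcoeff : coeff t (V * s ^ M) ≠ 0 := by
    have hmap : V * s ^ M = MvPolynomial.map (Int.castRingHom F)
        ((Matrix.vandermonde (fun i : Fin n => (X i : MvPolynomial (Fin n) ℤ))).det *
        (∑ i : Fin n, (X i : MvPolynomial (Fin n) ℤ)) ^ M) := by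
      simp [hV, hs, Matrix.det_vandermonde]
    rw [hmap, coeff_map]
    obtain ⟨H, hH⟩ := anr_coeff_dvd M t (by rw [htc]; exact hc) (by rw [htc]; exact hd)
    intro h0
    apply hM
    have := congrArg (Int.castRingHom F) hH
    rw [map_mul, h0, zero_mul] at this
    simpa using this
  have hVhom : V.IsHomogeneous (∑ i : Fin n, (i : ℕ)) := by
    rw [hV, ← Matrix.det_transpose, Matrix.det_apply']
    apply IsHomogeneous.sum
    intro σ _
    have hz : ((Equiv.Perm.sign σ : ℤ) : MvPolynomial (Fin n) F)
        = C (((Equiv.Perm.sign σ : ℤ)) : F) := by simp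
    rw [hz]
    apply IsHomogeneous.C_mul
    rw [← Equiv.sum_comp σ (fun i : Fin n => (i : ℕ))]
    apply IsHomogeneous.prod
    intro i _
    simpa using isHomogeneous_X_pow (R := F) i (σ i : ℕ)
  have hshom : s.IsHomogeneous 1 := IsHomogeneous.sum _ _ _ fun i _ => isHomogeneous_X _ i
  have hVs : ∀ k, (V * s ^ k).IsHomogeneous (∑ i : Fin n, (i : ℕ) + k) := fun k => by
    simpa using hVhom.mul (hshom.pow k)
  set g : Polynomial F := Polynomial.X ^ (M - S.card) * ∏ a ∈ S, (Polynomial.X - Polynomial.C a)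
    with hg
  have hPm : (∏ a ∈ S, (Polynomial.X - Polynomial.C a)).Monic :=
    Polynomial.monic_prod_of_monic _ _ fun a _ => Polynomial.monic_X_sub_C a
  have hgm : g.Monic := (Polynomial.monic_X_pow _).mul hPm
  have hgd : g.natDegree = M := by
    rw [hg, (Polynomial.monic_X_pow _).natDegree_mul hPm, Polynomial.natDegree_X_pow,
      Polynomial.natDegree_prod_of_monic _ _ fun a _ => Polynomial.monic_X_sub_C a]
    simp
    omega
  set f : MvPolynomial (Fin n) F := V * Polynomial.aeval s g with hf
  have hfsum : f = ∑ k ∈ Finset.range (M + 1), C (g.coeff k) * (V * s ^ k) := by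
    rw [hf, Polynomial.aeval_eq_sum_range, hgd, Finset.mul_sum]
    apply Finset.sum_congr rfl
    intro k _
    rw [smul_eq_C_mul]
    ring
  have hfc : coeff t f = coeff t (V * s ^ M) := by
    rw [hfsum, coeff_sum, Finset.sum_range_succ, Finset.sum_eq_zero, zero_add, coeff_C_mul]
    · have : g.coeff M = 1 := by rw [← hgd]; exact hgm
      rw [this, one_mul]
    · intro k hk
      rw [coeff_C_mul, (hVs k).coeff_eq_zero, mul_zero]
      have := Finset.mem_range.mp hk
      omega
  have hfne : coeff t f ≠ 0 := hfc ▸ hcoeff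
  have htot : f.totalDegree = t.degree := by
    apply le_antisymm
    · rw [hfsum]
      apply totalDegree_finsetSum_le
      intro k hk
      have := Finset.mem_range.mp hk
      have h2 := ((hVs k).C_mul (g.coeff k)).totalDegree_le
      omega
    · have := le_totalDegree (mem_support_iff.mpr hfne)
      simpa [Finsupp.degree_eq_sum, Finsupp.sum_fintype] using this
  obtain ⟨x, hxA, hx⟩ := combinatorial_nullstellensatz_exists_eval_nonzero f t hfne htot A
    (by rw [htc]; exact hcA)
  rw [hf, map_mul] at hx
  have hxV : eval x V = (Matrix.vandermonde x).det := by
    simp [hV, Matrix.det_vandermonde]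
  have hinj : Function.Injective x := by
    rw [← Matrix.det_vandermonde_ne_zero_iff, ← hxV]
    exact left_ne_zero_of_mul hx
  have hg0 := right_ne_zero_of_mul hx
  apply hg0
  have hmem := hS x hxA hinj
  have hsx : eval x s = ∑ i, x i := by simp [hs]
  simp only [hg, map_mul, map_prod, map_pow, map_sub, Polynomial.aeval_X, Polynomial.aeval_C, hsx]
  rw [Finset.prod_eq_zero hmem, mul_zero]
  simp [algebraMap_eq]

theorem stmt_7 {F : Type*} [Field F] (n : ℕ) (hn : 1 ≤ n)
    (A : Fin n → Finset F) (h0 : ∀ i : Fin n, 0 < (A i).card)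
    (hmono : ∀ i j : Fin n, i < j → (A i).card < (A j).card) :
    min (if ringChar F = 0 then (⊤ : ℕ∞) else (ringChar F : ℕ∞))
        ((1 + ∑ i : Fin n, ((A i).card - (i.1 + 1)) : ℕ)) ≤
      ({y : F | ∃ x : Fin n → F, (∀ i, x i ∈ A i) ∧ Function.Injective x ∧
          (∑ i, x i) = y}.ncard : ℕ∞) := by
  classical
  set T : Set F := {y : F | ∃ x : Fin n → F, (∀ i, x i ∈ A i) ∧ Function.Injective x ∧
          (∑ i, x i) = y} with hT
  have hfin : T.Finite := by
    apply ((Fintype.piFinset A).image (fun x => ∑ i, x i)).finite_toSet.subset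
    rintro y ⟨x, hx, -, rfl⟩
    simp only [Finset.coe_image]
    exact ⟨x, by simpa using hx, rfl⟩
  set m := ∑ i : Fin n, ((A i).card - (i.1 + 1)) with hm
  have hc : StrictMono (fun i => (A i).card - 1) := by
    intro i j hij
    have := hmono i j hij
    have := h0 i
    simp only
    omega
  have hsum : ∑ i, ((A i).card - 1) = m + ∑ i : Fin n, (i : ℕ) := by
    rw [hm, ← Finset.sum_add_distrib]
    apply Finset.sum_congr rfl
    intro i _
    have : (i : ℕ) ≤ (A i).card - 1 := anr_le _ hc i
    have := h0 i
    omega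
  have key : ∀ M ≤ m, (M.factorial : F) ≠ 0 → M < T.ncard := by
    intro M hMm hM
    obtain ⟨c, h1, h2, h3⟩ := anr_shrink M (m - M) _ hc (by rw [hsum]; omega)
    rw [Set.ncard_eq_toFinset_card T hfin]
    refine anr_main A M c h1 (fun i => ?_) h3 hM _ ?_
    · have := h2 i
      have := h0 i
      omega
    · intro x hx hi
      rw [Set.Finite.mem_toFinset]
      exact ⟨x, hx, hi, rfl⟩
  split_ifs with hp
  · have : CharZero F := by
      have := ringChar.of_eq hp
      exact CharP.charP_to_charZero F
    have := key m le_rfl (by exact_mod_cast Nat.factorial_ne_zero m)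
    apply (min_le_right _ _).trans
    exact_mod_cast (by omega : 1 + m ≤ T.ncard)
  · have hprime : (ringChar F).Prime :=
      (CharP.char_is_prime_or_zero F (ringChar F)).resolve_right hp
    have hpos := hprime.pos
    have := key (min (ringChar F - 1) m) (min_le_right _ _) (by
      rw [Ne, CharP.cast_eq_zero_iff F (ringChar F), hprime.dvd_factorial]
      omega)
    have h : min (ringChar F) (1 + m) ≤ T.ncard := by omega
    rcases min_le_iff.mp h with h | h
    · exact (min_le_left _ _).trans (by exact_mod_cast h)
    · exact (min_le_right _ _).trans (by exact_mod_cast h)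
end

section
/- Let A₁,…,Aₙ be finite nonempty subsets of a field F and let f(x₁,…,xₙ) = a₁x₁^k + ⋯ + aₙxₙ^k + g(x₁,…,xₙ) with k ≥ 1, a₁,…,aₙ ∈ F \ {0}, and deg g < k. Then |{ f(x₁,…,xₙ) : xᵢ ∈ Aᵢ }| ≥ min{ p(F), 1 + Σ_{i=1}^n ⌊(|Aᵢ| − 1)/k⌋ }. -/
open MvPolynomial

lemma aux_exists {n : ℕ} (q : Fin n → ℕ) (c : ℕ) (hc : c ≤ ∑ i, q i) :
    ∃ m : Fin n → ℕ, (∀ i, m i ≤ q i) ∧ ∑ i, m i = c := by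
  induction c with
  | zero => exact ⟨fun _ => 0, by simp, by simp⟩
  | succ c ih =>
    obtain ⟨m, hm, hs⟩ := ih (by omega)
    obtain ⟨i, -, hi⟩ : ∃ i ∈ Finset.univ, m i < q i :=
      Finset.exists_lt_of_sum_lt (by omega)
    refine ⟨m + Pi.single i 1, fun j => ?_, ?_⟩
    · by_cases h : j = i
      · subst h; simp; omega
      · simp [h, hm j]
    · simp [Finset.sum_add_distrib, hs]

lemma aux_prod {F : Type*} [Field F] {σ : Type*} (h g : MvPolynomial σ F) (k : ℕ)
    (hh : h.totalDegree ≤ k) (hg : g.totalDegree < k) (S : Finset F) :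
    ∃ r : MvPolynomial σ F, ∏ y ∈ S, (h + g - C y) = h ^ S.card + r ∧
      (r = 0 ∨ r.totalDegree < k * S.card) := by
  classical
  induction S using Finset.induction_on with
  | empty => exact ⟨0, by simp, Or.inl rfl⟩
  | insert y S hy ih =>
    obtain ⟨r, hr, hd⟩ := ih
    have he : (g - C y).totalDegree < k :=
      lt_of_le_of_lt (totalDegree_sub_C_le g y) hg
    refine ⟨h ^ S.card * (g - C y) + r * (h + g - C y), ?_, ?_⟩
    · rw [Finset.prod_insert hy, Finset.card_insert_of_notMem hy, hr]; ring
    · right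
      rw [Finset.card_insert_of_notMem hy, mul_add, mul_one]
      have h1 : (h ^ S.card * (g - C y)).totalDegree < k * S.card + k := by
        have a1 := totalDegree_mul (h ^ S.card) (g - C y)
        have a2 := totalDegree_pow h S.card
        have a3 : S.card * h.totalDegree ≤ k * S.card := by
          rw [mul_comm]; gcongr
        omega
      have h2 : (r * (h + g - C y)).totalDegree < k * S.card + k := by
        rcases hd with rfl | hd
        · simp; omega
        · have a1 := totalDegree_mul r (h + g - C y)
          have a2 : (h + g - C y).totalDegree ≤ k := by
            rw [add_sub_assoc]
            exact (totalDegree_add _ _).trans (max_le hh he.le)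
          omega
      exact lt_of_le_of_lt (totalDegree_add _ _) (max_lt h1 h2)

lemma aux_coeff_s9 {F : Type*} [Field F] (n k : ℕ) (hk1 : 1 ≤ k)
    (a : Fin n → F) (ha : ∀ i, a i ≠ 0) (c : ℕ) (hc : (c.factorial : F) ≠ 0)
    (m : Fin n →₀ ℕ) (hm : ∑ i, m i = c) :
    coeff (k • m) ((∑ i : Fin n, C (a i) * (X i : MvPolynomial (Fin n) F) ^ k) ^ c) ≠ 0 := by
  classical
  have : (∑ i : Fin n, C (a i) * (X i : MvPolynomial (Fin n) F) ^ k) ^ c =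
      expand k ((∑ i : Fin n, a i • (X i : MvPolynomial (Fin n) F)) ^ c) := by
    simp [smul_eq_C_mul]
  rw [this, coeff_expand_smul k (by omega)]
  have hs : m.sum (fun _ m => m) = c := by
    rw [Finsupp.sum_fintype _ _ (by simp)]; exact hm
  rw [coeff_linearCombination_X_pow_of_fintype, if_pos hs]
  refine mul_ne_zero ?_ ?_
  · intro h0
    apply hc
    have := Nat.multinomial_spec m.support m
    rw [Finsupp.sum] at hs
    rw [hs] at this
    rw [← this]
    push_cast
    rw [Finsupp.multinomial_eq] at h0
    rw [h0, mul_zero]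
  · exact Finset.prod_ne_zero_iff.mpr fun i _ => pow_ne_zero _ (ha i)

theorem stmt_9 {F : Type*} [Field F] (n k : ℕ) (hk1 : 1 ≤ k)
    (A : Fin n → Finset F) (hA : ∀ i, (A i).Nonempty)
    (a : Fin n → F) (ha : ∀ i, a i ≠ 0)
    (g f : MvPolynomial (Fin n) F)
    (hf : f = (∑ i : Fin n, C (a i) * (X i : MvPolynomial (Fin n) F) ^ k) + g)
    (hg : g.totalDegree < k) :
    min (if ringChar F = 0 then (⊤ : ℕ∞) else (ringChar F : ℕ∞))
        ((1 + ∑ i : Fin n, ((A i).card - 1) / k : ℕ)) ≤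
      ({y : F | ∃ x : Fin n → F, (∀ i, x i ∈ A i) ∧
          MvPolynomial.eval x f = y}.ncard : ℕ∞) := by
  classical
  set S : Finset F := (Fintype.piFinset A).image (fun x => eval x f) with hS
  have hset : {y : F | ∃ x : Fin n → F, (∀ i, x i ∈ A i) ∧ eval x f = y} = (S : Set F) := by
    ext y; simp [hS]
  rw [hset, Set.ncard_coe_finset]
  by_contra hlt
  rw [not_le, lt_min_iff] at hlt
  obtain ⟨h1, h2⟩ := hlt
  have h2 : S.card < 1 + ∑ i : Fin n, ((A i).card - 1) / k := by exact_mod_cast h2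
  have hfac : (S.card.factorial : F) ≠ 0 := by
    rw [Ne, ringChar.spec]
    by_cases h0 : ringChar F = 0
    · rw [h0, zero_dvd_iff]; exact Nat.factorial_ne_zero _
    · rw [if_neg h0] at h1
      have h1 : S.card < ringChar F := by exact_mod_cast h1
      have hp : (ringChar F).Prime :=
        (CharP.char_is_prime_or_zero F (ringChar F)).resolve_right h0
      rw [hp.dvd_factorial]; omega
  obtain ⟨m, hm, hms⟩ := aux_exists (fun i => ((A i).card - 1) / k) S.card (by omega)
  set t : Fin n →₀ ℕ := Finsupp.equivFunOnFinite.symm m with ht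
  set h : MvPolynomial (Fin n) F := ∑ i : Fin n, C (a i) * (X i) ^ k with hh
  have hhd : h.totalDegree ≤ k := by
    refine totalDegree_finsetSum_le fun i _ => ?_
    refine (totalDegree_mul _ _).trans ?_
    simp
  obtain ⟨r, hr, hrd⟩ := aux_prod h g k hhd hg S
  have hco := aux_coeff_s9 n k hk1 a ha S.card hfac t (by simpa [ht] using hms)
  rw [← hh] at hco
  have hdeg : (k • t).degree = k * S.card := by
    rw [Finsupp.degree_eq_sum, ← hms, Finset.mul_sum]; simp [ht]
  have hr0 : coeff (k • t) r = 0 := by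
    rcases hrd with rfl | hrd
    · simp
    · apply coeff_eq_zero_of_totalDegree_lt
      rw [← hdeg] at hrd
      exact hrd
  have hP : coeff (k • t) (h ^ S.card + r) ≠ 0 := by
    rw [coeff_add, hr0, add_zero]; exact hco
  have hPd : (h ^ S.card + r).totalDegree = (k • t).degree := by
    apply le_antisymm
    · rw [hdeg]
      refine (totalDegree_add _ _).trans (max_le ?_ ?_)
      · refine (totalDegree_pow _ _).trans ?_
        rw [mul_comm]; gcongr
      · rcases hrd with rfl | hrd
        · simp
        · exact hrd.le
    · exact le_totalDegree (mem_support_iff.mpr hP)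
  obtain ⟨s, hs, hne⟩ := combinatorial_nullstellensatz_exists_eval_nonzero _ (k • t) hP hPd A
    (fun i => by
      have b1 := hm i
      have b2 := Nat.mul_div_le ((A i).card - 1) k
      have b3 := Nat.mul_le_mul_left k b1
      have b4 := (hA i).card_pos
      simp only [ht, Finsupp.smul_apply, Finsupp.equivFunOnFinite_symm_apply_apply, smul_eq_mul]
      omega)
  apply hne
  rw [← hr, ← hf, map_prod]
  apply Finset.prod_eq_zero (i := eval s f)
  · rw [hS]; exact Finset.mem_image_of_mem _ (Fintype.mem_piFinset.mpr hs)
  · simp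
end
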